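/- Let s ∈ [1/2, 1) and let φ : Δ̃ → Δ̃ be the translation of the torus induced by (x,y) ↦ (x + 1/2, y − √3/2) (since (1,−√3) ∈ Λ, the paper's piecewise formula (x,y) ↦ (x,y)+(1/2,−√3/2) for y ≥ 0 and (x,y) ↦ (x,y)+(−1/2,√3/2) for y < 0 induces this single translation on Δ̃). Then the tetrahedral PET f̃_s is conjugate to f̃_{1−s} by φ: for every point p ∈ Δ̃ at which both sides are defined, f̃_s(p) = φ⁻¹( f̃_{1−s}( φ(p) ) ). -/

import Mathlib

open MeasureTheory
open scoped Classical

noncomputable section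

/-- The lattice Λ ⊂ ℝ² generated by (2,0) and (1,−√3). -/
def TetLat : AddSubgroup (ℝ × ℝ) :=
  AddSubgroup.closure {((2 : ℝ), (0 : ℝ)), ((1 : ℝ), -Real.sqrt 3)}

/-- The torus Δ̃ = ℝ²/Λ. -/
abbrev Torus := (ℝ × ℝ) ⧸ TetLat

/-- The quotient map ℝ² → Δ̃. -/
def tmk : ℝ × ℝ → Torus := QuotientAddGroup.mk

/-- The vertex sets of the four triangles A₀, A₁, A₂, A₃. -/
def triVerts : Fin 4 → Set (ℝ × ℝ)
  | 0 => {((-1 : ℝ), (0 : ℝ)), ((-1/2 : ℝ), Real.sqrt 3 / 2), ((0 : ℝ), (0 : ℝ))}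
  | 1 => {((-1 : ℝ), (0 : ℝ)), ((-1/2 : ℝ), Real.sqrt 3 / 2), ((-3/2 : ℝ), Real.sqrt 3 / 2)}
  | 2 => {((-1/2 : ℝ), Real.sqrt 3 / 2), ((0 : ℝ), (0 : ℝ)), ((1/2 : ℝ), Real.sqrt 3 / 2)}
  | 3 => {((-1 : ℝ), (0 : ℝ)), ((0 : ℝ), (0 : ℝ)), ((-1/2 : ℝ), -Real.sqrt 3 / 2)}

/-- The triangle A_α, as a subset of the torus Δ̃. -/
def TriA (α : Fin 4) : Set Torus := tmk '' (convexHull ℝ (triVerts α))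

/-- The involution ι of Δ̃, induced by (x,y) ↦ (−x,−y). -/
def iot : Torus → Torus := fun p => -p

/-- The unit vectors ω₀, ω₁, ω₂ in the directions of the cube roots of unity. -/
def om : Fin 3 → ℝ × ℝ
  | 0 => ((1 : ℝ), (0 : ℝ))
  | 1 => ((-1/2 : ℝ), Real.sqrt 3 / 2)
  | 2 => ((-1/2 : ℝ), -Real.sqrt 3 / 2)

/-- The index 3 − i. -/
def opp : Fin 3 → Fin 4
  | 0 => 3
  | 1 => 2
  | 2 => 1

/-- The open region where f̃ᵢ translates by +s·ωᵢ. -/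
def PosReg (i : Fin 3) : Set Torus :=
  interior ((⋃ α ∈ {a : Fin 4 | a ≠ opp i}, TriA α) ∪ iot '' TriA (opp i))

/-- The open region where f̃ᵢ translates by −s·ωᵢ. -/
def NegReg (i : Fin 3) : Set Torus :=
  interior (TriA (opp i) ∪ ⋃ α ∈ {a : Fin 4 | a ≠ opp i}, iot '' TriA α)

/-- The map f̃ᵢ (extended arbitrarily, by the −s·ωᵢ formula, off its domain of definition). -/
def fI (s : ℝ) (i : Fin 3) (p : Torus) : Torus :=
  if p ∈ PosReg i then p + tmk (s • om i) else p - tmk (s • om i)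

/-- The set where f̃ᵢ is defined. -/
def fIDef (i : Fin 3) (p : Torus) : Prop := p ∈ PosReg i ∨ p ∈ NegReg i

/-- The tetrahedral PET f̃ₛ = f̃₂ ∘ f̃₁ ∘ f̃₀. -/
def fS (s : ℝ) : Torus → Torus := fI s 2 ∘ fI s 1 ∘ fI s 0

/-- The set where f̃ₛ is defined. -/
def fSDef (s : ℝ) (p : Torus) : Prop :=
  fIDef 0 p ∧ fIDef 1 (fI s 0 p) ∧ fIDef 2 (fI s 1 (fI s 0 p))

/-!
The classes `c_j` of the `ω_j` are the three nonzero 2-torsion points of the torus, and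
`c₀ + c₁ + c₂ = 0`. Since `A_{3-i} = c_i - A₀`, the closed region where `f̃ᵢ` adds
`s·ωᵢ` is `A₀ ∪ (A₀ + c_i) ∪ (c_{i+1} - A₀) ∪ (c_{i+2} - A₀)`, and translation by
`c_{i+1}` carries it to its negative, so it exchanges the two regions of `f̃ᵢ`. As
`(1 - s)·ωᵢ` and `-s·ωᵢ` differ by `c_i` on the torus, this gives
`f̃_{i,1-s}(p + c_{i+1}) = f̃_{i,s}(p) + c_{i+2}`. Applying it for `i = 0, 1, 2` runs the
shift through `c₁ → c₂ → c₀ → c₁`, and `φ` is the translation by `c₁`.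

The two open regions of `f̃ᵢ` are disjoint because the linear form that vanishes on
`ωᵢ`, read modulo 2, sends them into the opposite half circles `[0, 1]` and `[-1, 0]`.
-/

open scoped Pointwise

section HalfPeriods

lemma tmk_add (x y : ℝ × ℝ) : tmk (x + y) = tmk x + tmk y := rfl

lemma tmk_neg (x : ℝ × ℝ) : tmk (-x) = -tmk x := rfl

lemma tmk_sub (x y : ℝ × ℝ) : tmk (x - y) = tmk x - tmk y := rfl

lemma tetLat_eq_closure_om :
    TetLat = AddSubgroup.closure {(2 : ℤ) • om 0, -((2 : ℤ) • om 1)} := by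
  have h0 : ((2 : ℝ), (0 : ℝ)) = (2 : ℤ) • om 0 := by ext <;> simp [om]
  have h1 : ((1 : ℝ), -√3) = -((2 : ℤ) • om 1) := by ext <;> simp [om] <;> ring
  rw [TetLat, h0, h1]

lemma om_add_two (i : Fin 3) : om (i + 2) = -(om i + om (i + 1)) := by
  fin_cases i <;> ext <;> simp [om] <;> ring

lemma two_zsmul_om_mem_tetLat (j : Fin 3) : (2 : ℤ) • om j ∈ TetLat := by
  have h0 : (2 : ℤ) • om 0 ∈ TetLat := by
    rw [tetLat_eq_closure_om]
    exact AddSubgroup.subset_closure (by simp)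
  have h1 : (2 : ℤ) • om 1 ∈ TetLat := by
    rw [← neg_mem_iff, tetLat_eq_closure_om]
    exact AddSubgroup.subset_closure (by simp)
  have h2 : (2 : ℤ) • om 2 ∈ TetLat := by
    have h : om 2 = -(om 0 + om 1) := om_add_two 0
    rw [h, zsmul_neg, zsmul_add]
    exact neg_mem (add_mem h0 h1)
  fin_cases j
  exacts [h0, h1, h2]

lemma neg_tmk_om (j : Fin 3) : -tmk (om j) = tmk (om j) := by
  have h : tmk ((2 : ℤ) • om j) = 0 :=
    (QuotientAddGroup.eq_zero_iff _).2 (two_zsmul_om_mem_tetLat j)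
  rw [two_zsmul, tmk_add] at h
  exact neg_eq_of_add_eq_zero_left h

lemma tmk_om_add_two (i : Fin 3) : tmk (om (i + 2)) = tmk (om i) + tmk (om (i + 1)) := by
  rw [← neg_tmk_om (i + 2), om_add_two, tmk_neg, neg_neg, tmk_add]

end HalfPeriods

section Triangles

lemma singleton_sub_triVerts_zero (v : ℝ × ℝ) :
    {v} - triVerts 0 = {v, v + om 0, v - om 1} := by
  have h : triVerts 0 = {0, -om 0, om 1} := by
    rw [triVerts, Set.pair_comm, Set.insert_comm]
    congr! 2
    simp [om]
  rw [h, Set.singleton_sub]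
  simp only [Set.image_insert_eq, Set.image_singleton, sub_zero, sub_neg_eq_add]

lemma exists_triVerts_opp_eq (i : Fin 3) :
    ∃ v, tmk v = tmk (om i) ∧ triVerts (opp i) = {v} - triVerts 0 := by
  fin_cases i
  · refine ⟨-om 0, neg_tmk_om 0, ?_⟩
    rw [singleton_sub_triVerts_zero]
    simp only [opp, triVerts]
    congr! 3 <;> norm_num [om, neg_div]
  · refine ⟨om 1, rfl, ?_⟩
    rw [singleton_sub_triVerts_zero, Set.pair_comm]
    simp only [opp, triVerts]
    congr! 3 <;> norm_num [om, neg_div]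
  · refine ⟨om 1 - om 0, ?_, ?_⟩
    · have h : tmk (om 2) = tmk (om 0) + tmk (om 1) := tmk_om_add_two 0
      rw [tmk_sub, sub_eq_add_neg, neg_tmk_om, add_comm, ← h]
      rfl
    · rw [singleton_sub_triVerts_zero, sub_add_cancel, Set.pair_comm, Set.insert_comm,
        Set.pair_comm]
      simp only [opp, triVerts]
      congr! 3 <;> norm_num [om, neg_div]

lemma triA_opp (i : Fin 3) : TriA (opp i) = {tmk (om i)} - TriA 0 := by
  obtain ⟨v, hv, hverts⟩ := exists_triVerts_opp_eq i
  rw [TriA, hverts, convexHull_sub, convexHull_singleton, ← hv]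
  exact (Set.image_sub (QuotientAddGroup.mk' TetLat)).trans (by rw [Set.image_singleton]; rfl)

lemma mem_triA_opp {i : Fin 3} {p : Torus} : p ∈ TriA (opp i) ↔ tmk (om i) - p ∈ TriA 0 := by
  rw [triA_opp, Set.singleton_sub, Set.mem_image]
  constructor
  · rintro ⟨q, hq, rfl⟩
    rwa [sub_sub_cancel]
  · exact fun h => ⟨_, h, sub_sub_cancel _ _⟩

/-- The closed region with interior `PosReg i`; by the symmetry `ι`, its negative is the closed
region with interior `NegReg i`. -/
def closedPosReg (i : Fin 3) : Set Torus :=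
  (⋃ α ∈ {a : Fin 4 | a ≠ opp i}, TriA α) ∪ iot '' TriA (opp i)

lemma mem_closedPosReg {i : Fin 3} {p : Torus} :
    p ∈ closedPosReg i ↔ p ∈ TriA 0 ∨ tmk (om i) + p ∈ TriA 0 ∨
      tmk (om (i + 1)) - p ∈ TriA 0 ∨ tmk (om (i + 2)) - p ∈ TriA 0 := by
  have hne (α : Fin 4) : α ≠ opp i ↔ α = 0 ∨ α = opp (i + 1) ∨ α = opp (i + 2) := by
    revert i α; decide
  have hiot : iot '' TriA (opp i) = -TriA (opp i) := Set.image_neg_eq_neg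
  simp only [closedPosReg, hiot, Set.mem_union, Set.mem_iUnion, Set.mem_ofPred_eq, exists_prop, hne,
    or_and_right, exists_or, exists_eq_left, Set.mem_neg, mem_triA_opp, sub_neg_eq_add]
  tauto

lemma negReg_eq_interior_neg_closedPosReg (i : Fin 3) :
    NegReg i = interior (-closedPosReg i) := by
  have hiot (S : Set Torus) : iot '' S = -S := Set.image_neg_eq_neg
  simp only [NegReg, closedPosReg, hiot, Set.union_neg, neg_neg, Set.iUnion_neg, Set.union_comm]

lemma add_mem_closedPosReg_iff (i : Fin 3) (p : Torus) :
    p + tmk (om (i + 1)) ∈ closedPosReg i ↔ -p ∈ closedPosReg i := by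
  have h1 : tmk (om i) + (p + tmk (om (i + 1))) = tmk (om (i + 2)) - -p := by
    rw [tmk_om_add_two]
    abel
  have h2 : tmk (om (i + 2)) - (p + tmk (om (i + 1))) = tmk (om i) + -p := by
    rw [tmk_om_add_two]
    abel
  have h3 : p + tmk (om (i + 1)) = tmk (om (i + 1)) - -p := by abel
  have h4 : tmk (om (i + 1)) - (p + tmk (om (i + 1))) = -p := by abel
  rw [mem_closedPosReg, mem_closedPosReg, h1, h2, h4, h3]
  tauto

lemma add_mem_posReg_iff (i : Fin 3) (p : Torus) :
    p + tmk (om (i + 1)) ∈ PosReg i ↔ p ∈ NegReg i := by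
  have h : (· + tmk (om (i + 1))) ⁻¹' closedPosReg i = -closedPosReg i :=
    Set.ext (add_mem_closedPosReg_iff i)
  rw [negReg_eq_interior_neg_closedPosReg, ← h]
  exact Set.ext_iff.1 ((Homeomorph.addRight (tmk (om (i + 1)))).preimage_interior _) p

end Triangles

section Strips

/-- The linear form with kernel spanned by `om i` that maps the planar triangle `A₀` onto `[0, 1]`;
its level lines cut the torus into strips parallel to `om i`. -/
def stripForm : Fin 3 → (ℝ × ℝ) →L[ℝ] ℝ
  | 0 => (2 / √3) • .snd ℝ ℝ ℝ
  | 1 => -.fst ℝ ℝ ℝ - (1 / √3) • .snd ℝ ℝ ℝ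
  | 2 => -.fst ℝ ℝ ℝ + (1 / √3) • .snd ℝ ℝ ℝ

lemma stripForm_om (i j : Fin 3) :
    stripForm i (om j) = (!![0, 1, -1; -1, 0, 1; -1, 1, 0] i j : ℤ) := by
  fin_cases i <;> fin_cases j <;> simp [stripForm, om] <;> field_simp <;> norm_num

lemma stripForm_mem_Icc_of_mem_convexHull (i : Fin 3) {x : ℝ × ℝ}
    (hx : x ∈ convexHull ℝ (triVerts 0)) : stripForm i x ∈ Set.Icc (0 : ℝ) 1 := by
  have hverts : triVerts 0 ⊆ stripForm i ⁻¹' Set.Icc 0 1 := by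
    rintro x (rfl | rfl | rfl) <;> fin_cases i <;> simp [stripForm] <;> field_simp <;> norm_num
  exact convexHull_min hverts ((convex_Icc 0 1).linear_preimage (stripForm i).toLinearMap) hx

lemma stripForm_ne_zero (i : Fin 3) : stripForm i ≠ 0 := by
  have h : stripForm i (om (i + 1)) ≠ 0 := by
    rw [stripForm_om]
    fin_cases i <;> simp
  exact fun h0 => h (by rw [h0, zero_apply])

lemma tetLat_le_comap_stripForm (i : Fin 3) :
    TetLat ≤ (AddSubgroup.zmultiples (2 : ℝ)).comap (stripForm i : ℝ × ℝ →+ ℝ) := by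
  have hom (j : Fin 3) : (2 : ℤ) • om j ∈ (AddSubgroup.zmultiples (2 : ℝ)).comap
      (stripForm i : ℝ × ℝ →+ ℝ) := by
    obtain ⟨n, hn⟩ : ∃ n : ℤ, stripForm i (om j) = n := ⟨_, stripForm_om i j⟩
    refine AddSubgroup.mem_zmultiples_iff.2 ⟨n, ?_⟩
    calc n • (2 : ℝ) = (2 : ℤ) • stripForm i (om j) := by simp [hn, mul_comm]
      _ = stripForm i ((2 : ℤ) • om j) := (map_zsmul (stripForm i) 2 (om j)).symm
  rw [tetLat_eq_closure_om, AddSubgroup.closure_le, Set.pair_subset_iff]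
  exact ⟨hom 0, neg_mem (hom 1)⟩

/-- The homomorphism from the torus to the circle `ℝ / 2ℤ` induced by `stripForm i`. -/
def stripCoord (i : Fin 3) : Torus →+ AddCircle (2 : ℝ) :=
  QuotientAddGroup.map _ _ (stripForm i : ℝ × ℝ →+ ℝ) (tetLat_le_comap_stripForm i)

lemma stripCoord_tmk (i : Fin 3) (x : ℝ × ℝ) : stripCoord i (tmk x) = (stripForm i x : ℝ) := rfl

lemma isOpenMap_stripCoord (i : Fin 3) : IsOpenMap (stripCoord i) := by
  have h : IsOpenMap (stripCoord i ∘ tmk) :=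
    QuotientAddGroup.isOpenMap_coe.comp
      ((stripForm i).isOpenMap_of_ne_zero (stripForm_ne_zero i))
  exact .of_comp continuous_quot_mk QuotientAddGroup.mk_surjective h

lemma stripCoord_om_self (i : Fin 3) : stripCoord i (tmk (om i)) = 0 := by
  rw [stripCoord_tmk, stripForm_om]
  fin_cases i <;> simp

lemma neg_coe_one_addCircle_two : -((1 : ℝ) : AddCircle (2 : ℝ)) = (1 : ℝ) := by
  rw [neg_eq_iff_add_eq_zero, ← AddCircle.coe_add, one_add_one_eq_two, AddCircle.coe_period]

lemma stripCoord_om_of_ne {i j : Fin 3} (h : j ≠ i) : stripCoord i (tmk (om j)) = (1 : ℝ) := by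
  rw [stripCoord_tmk, stripForm_om]
  revert h
  fin_cases i <;> fin_cases j <;> simp [neg_coe_one_addCircle_two]

lemma interior_eq_empty_of_finite_addCircle {T : ℝ} [hT : Fact (0 < T)] {S : Set (AddCircle T)}
    (hS : S.Finite) : interior S = ∅ := by
  have hne : ((T / 2 : ℝ) : AddCircle T) ≠ 0 := fun h =>
    (half_pos hT.out).ne' ((AddCircle.coe_eq_zero_iff_of_mem_Ico
      ⟨(half_pos hT.out).le, half_lt_self hT.out⟩).1 h)
  have : Nontrivial (AddCircle T) := ⟨_, _, hne⟩
  rw [interior_eq_empty_iff_dense_compl, Set.compl_eq_univ_sdiff]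
  exact dense_univ.sdiff_finite hS

/-- The image of `[0, 1]` in `ℝ / 2ℤ`, into which `stripCoord i` maps `closedPosReg i`. -/
def halfCircle : Set (AddCircle (2 : ℝ)) := (↑) '' Set.Icc (0 : ℝ) 1

lemma one_sub_mem_halfCircle_iff {c : AddCircle (2 : ℝ)} :
    (1 : ℝ) - c ∈ halfCircle ↔ c ∈ halfCircle := by
  suffices h : ∀ c ∈ halfCircle, (1 : ℝ) - c ∈ halfCircle from
    ⟨fun hc => by simpa only [sub_sub_cancel] using h _ hc, h c⟩
  rintro _ ⟨t, ⟨h0, h1⟩, rfl⟩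
  exact ⟨1 - t, ⟨by linarith, by linarith⟩, AddCircle.coe_sub ..⟩

lemma halfCircle_inter_neg_subset :
    halfCircle ∩ -halfCircle ⊆ {0, ((1 : ℝ) : AddCircle (2 : ℝ))} := by
  rintro _ ⟨⟨t, ⟨ht0, ht1⟩, rfl⟩, ⟨u, ⟨hu0, hu1⟩, hu⟩⟩
  have hsum : ((t + u : ℝ) : AddCircle (2 : ℝ)) = 0 := by
    rw [AddCircle.coe_add, hu, add_neg_cancel]
  obtain ⟨n, hn⟩ := AddCircle.coe_eq_zero_iff _ |>.1 hsum
  rw [zsmul_eq_mul] at hn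
  have hn0 : 0 ≤ n := by
    exact_mod_cast (by linarith : (0 : ℝ) ≤ n)
  have hn1 : n ≤ 1 := by
    exact_mod_cast (by linarith : (n : ℝ) ≤ 1)
  obtain rfl | rfl : n = 0 ∨ n = 1 := by omega
  · left
    rw [Int.cast_zero] at hn
    rw [show t = 0 by linarith, AddCircle.coe_zero]
  · right
    rw [Int.cast_one] at hn
    rw [show t = 1 by linarith]
    rfl

lemma stripCoord_mem_halfCircle_of_mem_triA_zero (i : Fin 3) {p : Torus} (hp : p ∈ TriA 0) :
    stripCoord i p ∈ halfCircle := by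
  obtain ⟨x, hx, rfl⟩ := hp
  exact ⟨_, stripForm_mem_Icc_of_mem_convexHull i hx, rfl⟩

lemma stripCoord_mem_halfCircle {i : Fin 3} {p : Torus} (hp : p ∈ closedPosReg i) :
    stripCoord i p ∈ halfCircle := by
  rcases mem_closedPosReg.1 hp with h | h | h | h <;>
    have h := stripCoord_mem_halfCircle_of_mem_triA_zero i h
  · exact h
  · rwa [map_add, stripCoord_om_self, zero_add] at h
  · rwa [map_sub, stripCoord_om_of_ne (by simp), one_sub_mem_halfCircle_iff] at h
  · rwa [map_sub, stripCoord_om_of_ne (by simp), one_sub_mem_halfCircle_iff] at h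

lemma disjoint_posReg_negReg (i : Fin 3) : Disjoint (PosReg i) (NegReg i) := by
  have hsub : closedPosReg i ∩ -closedPosReg i ⊆
      stripCoord i ⁻¹' {0, ((1 : ℝ) : AddCircle (2 : ℝ))} := by
    rintro p ⟨hp, hnp⟩
    refine halfCircle_inter_neg_subset ⟨stripCoord_mem_halfCircle hp, ?_⟩
    rw [Set.mem_neg, ← map_neg]
    exact stripCoord_mem_halfCircle hnp
  have : Fact ((0 : ℝ) < 2) := ⟨two_pos⟩
  rw [Set.disjoint_iff, PosReg, negReg_eq_interior_neg_closedPosReg, ← interior_inter,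
    ← Set.preimage_empty (f := stripCoord i),
    ← interior_eq_empty_of_finite_addCircle (Set.toFinite {0, ((1 : ℝ) : AddCircle (2 : ℝ))})]
  exact (interior_mono hsub).trans
    (isOpenMap_stripCoord i).interior_preimage_subset_preimage_interior

end Strips

section Conjugacy

lemma tmk_one_sub_smul (s : ℝ) (x : ℝ × ℝ) : tmk ((1 - s) • x) = tmk x - tmk (s • x) := by
  rw [sub_smul, one_smul, tmk_sub]

lemma fI_one_sub_add (s : ℝ) (i : Fin 3) {p : Torus} (hp : fIDef i p) :
    fI (1 - s) i (p + tmk (om (i + 1))) = fI s i p + tmk (om (i + 2)) := by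
  rcases hp with hp | hp
  · have hpw : p + tmk (om (i + 1)) ∉ PosReg i := fun h =>
      (disjoint_posReg_negReg i).notMem_of_mem_left hp ((add_mem_posReg_iff i p).1 h)
    rw [fI, fI, if_pos hp, if_neg hpw, tmk_one_sub_smul, tmk_om_add_two]
    nth_rw 1 [← neg_tmk_om i]
    abel
  · have hpw : p + tmk (om (i + 1)) ∈ PosReg i := (add_mem_posReg_iff i p).2 hp
    have hp' : p ∉ PosReg i := (disjoint_posReg_negReg i).notMem_of_mem_right hp
    rw [fI, fI, if_pos hpw, if_neg hp', tmk_one_sub_smul, tmk_om_add_two]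
    abel

end Conjugacy

theorem stmt_1_general (s : ℝ) (φ : Torus → Torus)
    (hφ : ∀ p : Torus, φ p = p + tmk ((1 / 2 : ℝ), -√3 / 2)) (p : Torus) (hp : fSDef s p) :
    φ (fS s p) = fS (1 - s) (φ p) := by
  have hφ' (q : Torus) : φ q = q + tmk (om 1) := by
    have hom : ((1 / 2 : ℝ), -√3 / 2) = -om 1 := by
      ext <;> simp [om] <;> ring
    rw [hφ, hom, tmk_neg, neg_tmk_om]
  obtain ⟨h0, h1, h2⟩ := hp
  rw [hφ', hφ']
  calc fS s p + tmk (om 1)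
      = fI (1 - s) 2 (fI s 1 (fI s 0 p) + tmk (om 0)) := (fI_one_sub_add s 2 h2).symm
    _ = fI (1 - s) 2 (fI (1 - s) 1 (fI s 0 p + tmk (om 2))) :=
        congrArg _ (fI_one_sub_add s 1 h1).symm
    _ = fS (1 - s) (p + tmk (om 1)) :=
        congrArg (fI (1 - s) 2 ∘ fI (1 - s) 1) (fI_one_sub_add s 0 h0).symm

/-- For s ∈ [1/2,1), the tetrahedral PET f̃ₛ is conjugate
to f̃₁₋ₛ by the translation φ of the torus induced by (x,y) ↦ (x+1/2, y−√3/2):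
wherever both sides are defined, φ(f̃ₛ(p)) = f̃₁₋ₛ(φ(p)), i.e. f̃ₛ = φ⁻¹ ∘ f̃₁₋ₛ ∘ φ. -/
theorem stmt_1 (s : ℝ) (hs : s ∈ Set.Ico (1/2 : ℝ) 1)
    (φ : Torus → Torus)
    (hφ : ∀ p : Torus, φ p = p + tmk ((1/2 : ℝ), -Real.sqrt 3 / 2)) :
    ∀ p : Torus, fSDef s p → fSDef (1 - s) (φ p) →
      φ (fS s p) = fS (1 - s) (φ p) :=
  fun p hp _ => stmt_1_general s φ hφ p hp

end
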